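/- arXiv:math/0507500 — 2 statements merged into one kernel-verified Lean document; each statement's English description precedes it below -/
import Mathlib

section
/- Let n ≥ 3 and let P ⊆ ℝ^n be an n-dimensional reflexive polytope with respect to the lattice ℤ^n. Then Λ_{n-2} = Λ_{n-1}, i.e., the subgroup of ℤ^n generated by all lattice points lying in faces of P of dimension at most n-2 equals the subgroup generated by all lattice points lying in faces of dimension at most n-1 (the boundary of P). -/
/-!
Write `P = {z | ∀ η ∈ W, -1 ≤ η z}` irredundantly; reflexivity makes every `η ∈ W` integral. The
ridge lattice is generated by the lattice points of `P` on two facets, in particular it contains all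
vertices. A lattice point `x` of `P` outside the ridge lattice is a stray root: it lies on exactly
one facet `F = -1` and has nonnegative height over all others. Adding `x` to a point of `P` off that
facet stays in `P`.

No nonzero point `u` of `P` in the ridge lattice has `F u = 0`, for otherwise all `x + k u` would be
in `P`. Sliding a vertex off the facet `F` along `x` down to height `0` therefore yields a second
stray root `w` on a facet `G`, with `F w = G x = 0`. Since `x + w` lies on both facets, the only
lattice point of `P` at height `0` over both is the origin.

If some nonzero point of `P` in the ridge lattice lies off `F` and `G`, sliding it along `x` and `w`
shows that it is `-x - w`. Then all vertices at the maximal height `1` over `F` lie in the plane of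
`x` and `w`, although `-x` is interior to a facet and can be moved out of the plane at that height,
as `n ≥ 3`.

If there is no such point, every other facet functional `H` is positive on `x` and `w`. Sliding
points of heights `g` over `G` and `k` over `F` compares the heights over `H` of the stray roots on
`F` and `G` and forces, up to exchanging `F` and `G`, `H w = 1`. Then `-w ∈ P` lies on all facets
other than `F` and `G`; as `-w` is not in the ridge lattice there is only one such facet, and three
inequalities cannot bound `P` in dimension `n ≥ 3`.
-/

/-- The standard pairing `⟨x, y⟩ = ∑ i, x i * y i` on `ℝ^n`. -/
def dotProd {n : ℕ} (x y : Fin n → ℝ) : ℝ := ∑ i, x i * y i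

/-- A point of `ℝ^n` is a lattice point if all its coordinates are integers. -/
def IsLatticePt {n : ℕ} (x : Fin n → ℝ) : Prop := ∀ i, ∃ m : ℤ, x i = (m : ℝ)

/-- A lattice polytope is the convex hull of finitely many lattice points. -/
def IsLatticePolytope {n : ℕ} (P : Set (Fin n → ℝ)) : Prop :=
  ∃ V : Set (Fin n → ℝ), V.Finite ∧ (∀ x ∈ V, IsLatticePt x) ∧ P = convexHull ℝ V

/-- The dual polytope `P* = {y : ⟨x, y⟩ ≥ -1 for all x ∈ P}`. -/
def dualPolytope {n : ℕ} (P : Set (Fin n → ℝ)) : Set (Fin n → ℝ) :=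
  {y | ∀ x ∈ P, -1 ≤ dotProd x y}

/-- A reflexive polytope: a lattice polytope containing `0` in its interior
(hence full-dimensional) whose dual is again a lattice polytope. -/
def IsReflexive {n : ℕ} (P : Set (Fin n → ℝ)) : Prop :=
  IsLatticePolytope P ∧ (0 : Fin n → ℝ) ∈ interior P ∧ IsLatticePolytope (dualPolytope P)

/-- A face of a polytope (an exposed face). -/
def IsFaceOf {n : ℕ} (P F : Set (Fin n → ℝ)) : Prop := IsExposed ℝ P F

/-- A facet: a nonempty face of dimension `n - 1`. -/
def IsFacetOf {n : ℕ} (P F : Set (Fin n → ℝ)) : Prop :=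
  IsFaceOf P F ∧ F.Nonempty ∧ Module.finrank ℝ ↥(vectorSpan ℝ F) = n - 1

/-- `Λ_k` : the subgroup of `ℝ^n` generated by all lattice points lying in faces of `P`
of dimension at most `k` (the `k`-skeleton).  It is a subgroup of the lattice `ℤ^n`. -/
def skeletonLattice {n : ℕ} (P : Set (Fin n → ℝ)) (k : ℕ) : AddSubgroup (Fin n → ℝ) :=
  AddSubgroup.closure
    {x | IsLatticePt x ∧
      ∃ F : Set (Fin n → ℝ), IsFaceOf P F ∧ Module.finrank ℝ ↥(vectorSpan ℝ F) ≤ k ∧ x ∈ F}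

/-- The lattice `ℤ^n`, as the subgroup of `ℝ^n` generated by (= consisting of) all
lattice points. -/
def latticeSubgroup (n : ℕ) : AddSubgroup (Fin n → ℝ) :=
  AddSubgroup.closure {x | IsLatticePt x}

/-- `x` is a (Demazure) root of `P` with facet `F` and inner normal `η`:
`x` is a lattice point in the relative interior of the facet `F`, and `η` is the
lattice point with `⟨η, v⟩ = -1` for all `v ∈ F`. -/
def IsRoot {n : ℕ} (P : Set (Fin n → ℝ)) (x : Fin n → ℝ) (F : Set (Fin n → ℝ))
    (η : Fin n → ℝ) : Prop :=
  IsLatticePt x ∧ IsFacetOf P F ∧ x ∈ intrinsicInterior ℝ F ∧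
    IsLatticePt η ∧ ∀ v ∈ F, dotProd η v = -1

section Convexity

variable {E : Type*} [AddCommGroup E] [Module ℝ E]

theorem mem_convexHull_inter_of_eq {V : Set E} {f : Module.Dual ℝ E} {c : ℝ} {p : E}
    (hV : ∀ v ∈ V, c ≤ f v) (hp : p ∈ convexHull ℝ V) (hfp : f p = c) :
    p ∈ convexHull ℝ (V ∩ {v | f v = c}) := by
  classical
  obtain ⟨ι, _, a, v, ha, ha1, hv, rfl⟩ := mem_convexHull_iff_exists_fintype.1 hp
  have hsum : ∑ i, a i * (f (v i) - c) = 0 := by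
    simp only [map_sum, map_smul, smul_eq_mul] at hfp
    simp only [mul_sub, Finset.sum_sub_distrib, ← Finset.sum_mul, ha1, hfp, one_mul, sub_self]
  have hzero := (Finset.sum_eq_zero_iff_of_nonneg fun i _ ↦
    mul_nonneg (ha i) (sub_nonneg.2 (hV _ (hv i)))).1 hsum
  have htight (i : ι) (hi : a i ≠ 0) : f (v i) = c :=
    sub_eq_zero.1 ((mul_eq_zero.1 (hzero i (Finset.mem_univ i))).resolve_left hi)
  rw [← Finset.centerMass_eq_of_sum_1 _ _ ha1, ← Finset.centerMass_filter_ne_zero]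
  refine Finset.centerMass_mem_convexHull _ (fun i _ ↦ ha i) ?_ fun i hi ↦
    ⟨hv i, htight i (Finset.mem_filter.1 hi).2⟩
  rw [Finset.sum_filter_ne_zero, ha1]
  exact one_pos

theorem mem_extremePoints_convexHull_insert {v : E} {U : Set E} (hv : v ∉ convexHull ℝ U) :
    v ∈ (convexHull ℝ (insert v U)).extremePoints ℝ := by
  rcases U.eq_empty_or_nonempty with rfl | hU
  · simp
  refine ⟨subset_convexHull ℝ _ (Set.mem_insert v U), fun x hx y hy ⟨s, t, hs, ht, hst, hxy⟩ ↦ ?_⟩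
  simp only [convexHull_insert hU, convexJoin_singleton_left, Set.mem_iUnion, segment_eq_image',
    Set.mem_image, Set.mem_Icc, exists_prop] at hx hy
  obtain ⟨x', hx', a, ⟨ha, -⟩, rfl⟩ := hx
  obtain ⟨y', hy', b, ⟨hb, -⟩, rfl⟩ := hy
  by_contra hne
  have ha0 : 0 < a := ha.lt_of_ne' (by rintro rfl; simp at hne)
  have hpos : 0 < s * a + t * b := by positivity
  have hcomb : (s * a + t * b) • v = (s * a) • x' + (t * b) • y' := by
    linear_combination (norm := module) hst • v - hxy
  refine hv ?_
  convert convex_iff_div.1 (convex_convexHull ℝ U) hx' hy' (mul_nonneg hs.le ha)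
    (mul_nonneg ht.le hb) hpos
  rw [← smul_right_inj hpos.ne', hcomb, smul_add, smul_smul, smul_smul, mul_div_cancel₀ _ hpos.ne',
    mul_div_cancel₀ _ hpos.ne']

theorem convexHull_extremePoints_convexHull_of_finite {V : Set E} (hV : V.Finite) :
    convexHull ℝ ((convexHull ℝ V).extremePoints ℝ) = convexHull ℝ V := by
  obtain ⟨U, ⟨hUV, hU⟩, hmin⟩ := Set.Finite.exists_minimal
    (s := {U | U ⊆ V ∧ convexHull ℝ U = convexHull ℝ V})
    (hV.finite_subsets.subset fun U h ↦ h.1) ⟨V, subset_rfl, rfl⟩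
  rw [← hU]
  refine (convexHull_min extremePoints_subset (convex_convexHull ℝ U)).antisymm
    (convexHull_mono fun v hv ↦ ?_)
  have hinsert : insert v (U \ {v}) = U := Set.insert_sdiff_self_of_mem hv
  have hmem : v ∉ convexHull ℝ (U \ {v}) := fun h ↦ by
    have hsub : U ⊆ convexHull ℝ (U \ {v}) :=
      hinsert.symm.subset.trans (Set.insert_subset h (subset_convexHull ℝ _))
    have hhull : convexHull ℝ (U \ {v}) = convexHull ℝ U :=
      (convexHull_mono Set.sdiff_subset).antisymm (convexHull_min hsub (convex_convexHull ℝ _))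
    exact (hmin ⟨Set.sdiff_subset.trans hUV, hhull.trans hU⟩ Set.sdiff_subset hv).2 rfl
  simpa only [hinsert] using mem_extremePoints_convexHull_insert hmem

end Convexity

/-- The polyhedron cut out by the inequalities `-1 ≤ η z` for `η ∈ W`. -/
def polarSet {E : Type*} [AddCommGroup E] [Module ℝ E] (W : Set (Module.Dual ℝ E)) : Set E :=
  {z | ∀ η ∈ W, -1 ≤ η z}

section PolarSet

open Filter Topology

variable {E : Type*} [AddCommGroup E] [Module ℝ E] {W : Set (Module.Dual ℝ E)} {z d : E}

theorem zero_mem_polarSet : (0 : E) ∈ polarSet W := fun η _ ↦ by simp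

theorem polarSet_convexHull (W : Set (Module.Dual ℝ E)) :
    polarSet (convexHull ℝ W) = polarSet W := by
  refine Set.Subset.antisymm (fun z hz η hη ↦ hz η (subset_convexHull ℝ W hη)) fun z hz ↦ ?_
  exact convexHull_min hz (convex_halfSpace_ge (Module.Dual.eval ℝ E z).isLinear (-1))

theorem exists_subset_polarSet_eq_irredundant (hW : W.Finite) :
    ∃ W' ⊆ W, polarSet W' = polarSet W ∧ ∀ H ∈ W', ∃ z ∈ polarSet (W' \ {H}), H z < -1 := by
  obtain ⟨W', ⟨hsub, heq⟩, hmin⟩ := Set.Finite.exists_minimal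
    (s := {W' | W' ⊆ W ∧ polarSet W' = polarSet W})
    (hW.finite_subsets.subset fun W' h ↦ h.1) ⟨W, subset_rfl, rfl⟩
  refine ⟨W', hsub, heq, fun H hH ↦ ?_⟩
  by_contra! hredundant
  have hpolar : polarSet (W' \ {H}) = polarSet W' := by
    refine Set.Subset.antisymm (fun z hz η hη ↦ ?_) fun z hz η hη ↦ hz η hη.1
    by_cases hηH : η = H
    · exact hηH ▸ hredundant z hz
    · exact hz η ⟨hη, hηH⟩
  exact (hmin ⟨Set.sdiff_subset.trans hsub, hpolar.trans heq⟩ Set.sdiff_subset hH).2 rfl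

theorem eventually_add_smul_mem_polarSet (hW : W.Finite) (hz : z ∈ polarSet W)
    (hd : ∀ η ∈ W, η z = -1 → 0 ≤ η d) : ∀ᶠ t : ℝ in 𝓝[>] 0, z + t • d ∈ polarSet W := by
  refine (eventually_all_finite hW).2 fun η hη ↦ ?_
  simp only [map_add, map_smul, smul_eq_mul]
  rcases (hz η hη).eq_or_lt with htight | hlt
  · filter_upwards [self_mem_nhdsWithin] with t ht
    linarith [mul_nonneg (le_of_lt ht) (hd η hη htight.symm)]
  · have hcont : ContinuousAt (fun t : ℝ ↦ η z + t * η d) 0 := by fun_prop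
    have hev := hcont.eventually_const_lt (by simpa using hlt)
    exact (hev.filter_mono nhdsWithin_le_nhds).mono fun t ht ↦ ht.le

theorem exists_add_smul_mem_polarSet (hW : W.Finite) (hz : z ∈ polarSet W)
    (hd : ∀ η ∈ W, η z = -1 → 0 ≤ η d) : ∃ t : ℝ, 0 < t ∧ z + t • d ∈ polarSet W := by
  obtain ⟨t, hmem, ht⟩ :=
    ((eventually_add_smul_mem_polarSet hW hz hd).and self_mem_nhdsWithin).exists
  exact ⟨t, ht, hmem⟩

/-- A nonzero direction on which all tight functionals vanish could be followed both ways. -/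
theorem eq_zero_of_mem_extremePoints_polarSet (hW : W.Finite)
    (hz : z ∈ (polarSet W).extremePoints ℝ) (hd : ∀ η ∈ W, η z = -1 → η d = 0) : d = 0 := by
  obtain ⟨t, ⟨hplus, hminus⟩, ht⟩ := ((eventually_add_smul_mem_polarSet hW hz.1
    fun η hη h ↦ (hd η hη h).ge).and (eventually_add_smul_mem_polarSet (d := -d) hW hz.1
    fun η hη h ↦ by simp [hd η hη h])).and self_mem_nhdsWithin |>.exists
  have hmid : z ∈ openSegment ℝ (z + t • d) (z + t • -d) :=
    ⟨1 / 2, 1 / 2, by norm_num, by norm_num, by norm_num, by module⟩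
  have hsmul : t • d = 0 := by simpa using hz.2 hplus hminus hmid
  exact (smul_eq_zero.1 hsmul).resolve_left (ne_of_gt ht)

theorem exists_ne_zero_nonneg_of_two_lt_finrank (hE : 2 < Module.finrank ℝ E)
    (F G A : Module.Dual ℝ E) : ∃ e ≠ 0, F e = 0 ∧ G e = 0 ∧ 0 ≤ A e := by
  have : FiniteDimensional ℝ E := Module.finite_of_finrank_pos (by omega)
  obtain ⟨e, he, he0⟩ := Submodule.exists_mem_ne_zero_of_ne_bot
    (LinearMap.ker_ne_bot_of_finrank_lt (f := F.prod G) (by simpa using hE))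
  obtain ⟨hF, hG⟩ : F e = 0 ∧ G e = 0 := by simpa using he
  rcases le_total 0 (A e) with hA | hA
  · exact ⟨e, he0, hF, hG, hA⟩
  · exact ⟨-e, neg_ne_zero.2 he0, by simp [hF], by simp [hG], by simpa using hA⟩

theorem exists_tight_pair_of_mem_extremePoints (hE : 1 < Module.finrank ℝ E) (hW : W.Finite)
    (hz : z ∈ (polarSet W).extremePoints ℝ) :
    ∃ η ∈ W, ∃ η' ∈ W, η ≠ η' ∧ η z = -1 ∧ η' z = -1 := by
  have : FiniteDimensional ℝ E := Module.finite_of_finrank_pos (by omega)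
  by_contra! hc
  obtain ⟨F, hF⟩ : ∃ F : Module.Dual ℝ E, ∀ η ∈ W, η z = -1 → η = F := by
    by_cases htight : ∃ F ∈ W, F z = -1
    · obtain ⟨F, hF, hFz⟩ := htight
      exact ⟨F, fun η hη hηz ↦ by_contra fun hne ↦ hc η hη F hF hne hηz hFz⟩
    · exact ⟨0, fun η hη hηz ↦ (htight ⟨η, hη, hηz⟩).elim⟩
  obtain ⟨d, hd, hd0⟩ := Submodule.exists_mem_ne_zero_of_ne_bot
    (LinearMap.ker_ne_bot_of_finrank_lt (f := F) (by simpa using hE))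
  exact hd0 (eq_zero_of_mem_extremePoints_polarSet hW hz fun η hη hηz ↦ hF η hη hηz ▸ hd)

end PolarSet

theorem le_one_of_natCast_mul_le_add_one {g k : ℕ} {a b : ℝ} (ha : 0 ≤ a) (hb : 0 ≤ b)
    (hg : 2 ≤ g) (hk : 1 ≤ k) (hgk : ¬(g = 2 ∧ k = 1)) (hgb : g * b ≤ a + 1)
    (hka : k * a ≤ b + 1) : b ≤ 1 := by
  obtain hk2 | ⟨rfl, hg3⟩ : 2 ≤ k ∨ k = 1 ∧ 3 ≤ g := by omega
  · have hg' : (2 : ℝ) ≤ g := by exact_mod_cast hg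
    have hk' : (2 : ℝ) ≤ k := by exact_mod_cast hk2
    linarith [mul_le_mul_of_nonneg_right hg' hb, mul_le_mul_of_nonneg_right hk' ha]
  · have hg' : (3 : ℝ) ≤ g := by exact_mod_cast hg3
    rw [Nat.cast_one] at hka
    linarith [mul_le_mul_of_nonneg_right hg' hb]

section ReflexiveSystem

variable {E : Type*} [AddCommGroup E] [Module ℝ E]

/-- The facet description of a reflexive polytope with respect to the lattice `L`: `polarSet W` is
a lattice polytope, and `W` consists of finitely many functionals, integral on `L`, none of which
can be omitted. -/
structure IsReflexiveSystem (W : Set (Module.Dual ℝ E)) (L : AddSubgroup E) : Prop where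
  finite : W.Finite
  integral : ∀ η ∈ W, ∀ z ∈ L, ∃ m : ℤ, η z = m
  irredundant : ∀ H ∈ W, ∃ z ∈ polarSet (W \ {H}), H z < -1
  exists_hull : ∃ V : Set E, V.Finite ∧ V ⊆ L ∧ convexHull ℝ V = polarSet W

/-- The subgroup generated by the points of `L` on the ridges of `polarSet W`, a ridge being the
intersection of two facets. -/
def ridgeLattice (W : Set (Module.Dual ℝ E)) (L : AddSubgroup E) : AddSubgroup E :=
  AddSubgroup.closure
    {z | z ∈ L ∧ z ∈ polarSet W ∧ ∃ η ∈ W, ∃ η' ∈ W, η ≠ η' ∧ η z = -1 ∧ η' z = -1}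

/-- A root `x`, that is, a point of `L` in the relative interior of the facet `F = -1`, which does
not belong to the ridge lattice. -/
structure StrayRoot (W : Set (Module.Dual ℝ E)) (L : AddSubgroup E) (F : Module.Dual ℝ E)
    (x : E) : Prop where
  facet : F ∈ W
  mem_lattice : x ∈ L
  tight : F x = -1
  nonneg : ∀ η ∈ W, η ≠ F → 0 ≤ η x
  notMem : x ∉ ridgeLattice W L

/-- Two stray roots, each at height `0` over the facet of the other one. -/
structure StrayPair (W : Set (Module.Dual ℝ E)) (L : AddSubgroup E) (F G : Module.Dual ℝ E)
    (x w : E) : Prop where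
  left : StrayRoot W L F x
  right : StrayRoot W L G w
  left_zero : F w = 0
  right_zero : G x = 0

/-- The two facets `F` and `G` together contain all nonzero points of the ridge lattice that lie
in `polarSet W`. -/
def CoveredBy (W : Set (Module.Dual ℝ E)) (L : AddSubgroup E) (F G : Module.Dual ℝ E) : Prop :=
  ∀ v ∈ polarSet W, v ∈ ridgeLattice W L → v ≠ 0 → F v = -1 ∨ G v = -1

variable {W : Set (Module.Dual ℝ E)} {L : AddSubgroup E} {F G H η η' : Module.Dual ℝ E}
  {x w v v' z : E}

theorem ridgeLattice_le : ridgeLattice W L ≤ L :=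
  (AddSubgroup.closure_le _).2 fun _ hz ↦ hz.1

theorem mem_ridgeLattice_of_tight (hzL : z ∈ L) (hz : z ∈ polarSet W) (hη : η ∈ W) (hη' : η' ∈ W)
    (hne : η ≠ η') (h : η z = -1) (h' : η' z = -1) : z ∈ ridgeLattice W L :=
  AddSubgroup.subset_closure ⟨hzL, hz, η, hη, η', hη', hne, h, h'⟩

namespace StrayRoot

theorem ne_zero (h : StrayRoot W L F x) : x ≠ 0 := by
  rintro rfl
  exact h.notMem (zero_mem _)

theorem facet_ne_zero (h : StrayRoot W L F x) : F ≠ 0 := by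
  rintro rfl
  simpa using h.tight

theorem mem_polarSet (h : StrayRoot W L F x) : x ∈ polarSet W := by
  intro η hη
  by_cases hηF : η = F
  · rw [hηF, h.tight]
  · linarith [h.nonneg η hη hηF]

theorem eq_of_neg (h : StrayRoot W L F x) (hη : η ∈ W) (hneg : η x < 0) : η = F :=
  by_contra fun hne ↦ hneg.not_ge (h.nonneg η hη hne)

theorem add_nsmul_mem_polarSet (h : StrayRoot W L F x) (hv : v ∈ polarSet W) {k : ℕ}
    (hk : k ≤ F v + 1) : v + k • x ∈ polarSet W := by
  intro η hη
  rw [map_add, map_nsmul, nsmul_eq_mul]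
  by_cases hηF : η = F
  · rw [hηF, h.tight]
    linarith
  · linarith [hv η hη, mul_nonneg k.cast_nonneg (h.nonneg η hη hηF)]

theorem add_mem_polarSet (h : StrayRoot W L F x) (hv : v ∈ polarSet W) (hFv : 0 ≤ F v) :
    v + x ∈ polarSet W := by
  simpa only [one_nsmul] using h.add_nsmul_mem_polarSet hv (k := 1) (by simpa using hFv)

end StrayRoot

namespace StrayPair

theorem symm (h : StrayPair W L F G x w) : StrayPair W L G F w x :=
  ⟨h.right, h.left, h.right_zero, h.left_zero⟩

theorem facet_ne (h : StrayPair W L F G x w) : F ≠ G := by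
  rintro rfl
  linarith [h.left.tight, h.right_zero]

theorem add_mem_ridgeLattice (h : StrayPair W L F G x w) : x + w ∈ ridgeLattice W L :=
  mem_ridgeLattice_of_tight (add_mem h.left.mem_lattice h.right.mem_lattice)
    (h.right.add_mem_polarSet h.left.mem_polarSet h.right_zero.ge) h.left.facet h.right.facet
    h.facet_ne (by rw [map_add, h.left.tight, h.left_zero, add_zero])
    (by rw [map_add, h.right.tight, h.right_zero, zero_add])

end StrayPair

theorem CoveredBy.symm (h : CoveredBy W L F G) : CoveredBy W L G F :=
  fun v hv hvR hv0 ↦ (h v hv hvR hv0).symm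

namespace IsReflexiveSystem

theorem eq_neg_one_or_nonneg (hs : IsReflexiveSystem W L) (hη : η ∈ W) (hzL : z ∈ L)
    (hz : z ∈ polarSet W) : η z = -1 ∨ 0 ≤ η z := by
  obtain ⟨m, hm⟩ := hs.integral η hη z hzL
  have hge : -1 ≤ η z := hz η hη
  rw [hm] at hge ⊢
  norm_cast at hge ⊢
  omega

theorem one_le_of_pos (hs : IsReflexiveSystem W L) (hη : η ∈ W) (hzL : z ∈ L) (h : 0 < η z) :
    1 ≤ η z := by
  obtain ⟨m, hm⟩ := hs.integral η hη z hzL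
  rw [hm] at h ⊢
  exact_mod_cast h

theorem exists_natCast_eq (hs : IsReflexiveSystem W L) (hη : η ∈ W) (hzL : z ∈ L)
    (h : 0 ≤ η z) : ∃ k : ℕ, η z = k := by
  obtain ⟨m, hm⟩ := hs.integral η hη z hzL
  rw [hm] at h
  lift m to ℕ using by exact_mod_cast h
  exact ⟨m, hm⟩

theorem exists_le_of_mem_polarSet (hs : IsReflexiveSystem W L) (f : Module.Dual ℝ E) :
    ∃ M, ∀ z ∈ polarSet W, f z ≤ M := by
  obtain ⟨V, hVfin, -, hV⟩ := hs.exists_hull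
  obtain ⟨M, hM⟩ := (hVfin.image f).bddAbove
  rw [← hV]
  exact ⟨M, convexHull_min (fun v hv ↦ hM ⟨v, hv, rfl⟩) (convex_halfSpace_le f.isLinear M)⟩

theorem eq_zero_of_forall_add_nsmul_mem (hs : IsReflexiveSystem W L) {u : E}
    (h : ∀ k : ℕ, x + k • u ∈ polarSet W) : u = 0 := by
  refine (Module.forall_dual_apply_eq_zero_iff ℝ u).1 fun f ↦ by_contra fun hfu ↦ ?_
  obtain ⟨M, hM⟩ := hs.exists_le_of_mem_polarSet (f u • f)
  obtain ⟨k, hk⟩ := exists_lt_nsmul (mul_self_pos.2 hfu) (M - f u * f x)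
  have hle := hM _ (h k)
  simp only [LinearMap.smul_apply, map_add, map_nsmul, smul_eq_mul, nsmul_eq_mul] at hle hk
  linarith

theorem eq_zero_of_forall_nonneg (hs : IsReflexiveSystem W L) {u : E}
    (hu : ∀ η ∈ W, 0 ≤ η u) : u = 0 := by
  refine hs.eq_zero_of_forall_add_nsmul_mem (x := 0) fun k η hη ↦ ?_
  rw [zero_add, map_nsmul, nsmul_eq_mul]
  linarith [mul_nonneg k.cast_nonneg (hu η hη)]

/-- Rescaling a witness of irredundancy to height `-1` makes all other inequalities strict. -/
theorem exists_tight_only (hs : IsReflexiveSystem W L) (hH : H ∈ W) :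
    ∃ p ∈ polarSet W, H p = -1 ∧ ∀ η ∈ W, η ≠ H → -1 < η p := by
  obtain ⟨z, hz, hHz⟩ := hs.irredundant H hH
  have hpos : 0 < (-H z)⁻¹ := inv_pos.2 (by linarith)
  have hlt : (-H z)⁻¹ < 1 := inv_lt_one_of_one_lt₀ (by linarith)
  have htight : H ((-H z)⁻¹ • z) = -1 := by
    rw [map_smul, smul_eq_mul, inv_mul_eq_iff_eq_mul₀ (by linarith)]
    ring
  have hstrict (η) (hη : η ∈ W) (hne : η ≠ H) : -1 < η ((-H z)⁻¹ • z) := by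
    rw [map_smul, smul_eq_mul]
    nlinarith [hz η ⟨hη, hne⟩]
  refine ⟨_, fun η hη ↦ ?_, htight, hstrict⟩
  by_cases hηH : η = H
  · rw [hηH, htight]
  · exact (hstrict η hη hηH).le

/-- Every extreme point of the polytope lies on two facets. -/
theorem polarSet_subset_convexHull_ridgeLattice (hs : IsReflexiveSystem W L)
    (hE : 1 < Module.finrank ℝ E) :
    polarSet W ⊆ convexHull ℝ (polarSet W ∩ ridgeLattice W L) := by
  obtain ⟨V, hVfin, hVL, hV⟩ := hs.exists_hull
  have hextreme : (polarSet W).extremePoints ℝ ⊆ polarSet W ∩ ridgeLattice W L := fun z hz ↦ by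
    obtain ⟨η, hη, η', hη', hne, h, h'⟩ :=
      exists_tight_pair_of_mem_extremePoints hE hs.finite hz
    have hzV : z ∈ V := extremePoints_convexHull_subset (hV.symm ▸ hz)
    exact ⟨hz.1, mem_ridgeLattice_of_tight (hVL hzV) hz.1 hη hη' hne h h'⟩
  have hhull := convexHull_extremePoints_convexHull_of_finite hVfin
  rw [hV] at hhull
  exact hhull.symm.subset.trans (convexHull_mono hextreme)

theorem exists_mem_ridgeLattice_pos (hs : IsReflexiveSystem W L) (hE : 1 < Module.finrank ℝ E)
    {f : Module.Dual ℝ E} (hf : f ≠ 0) : ∃ v ∈ polarSet W, v ∈ ridgeLattice W L ∧ 0 < f v := by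
  by_contra! hc
  obtain ⟨d, hd⟩ : ∃ d, 0 < f d := by
    obtain ⟨d, hd⟩ := DFunLike.ne_iff.1 hf
    exact ⟨f d • d, by simpa using mul_self_pos.2 hd⟩
  obtain ⟨t, ht, hmem⟩ := exists_add_smul_mem_polarSet (d := d) hs.finite zero_mem_polarSet
    fun η _ h ↦ by simp at h
  have hle : f (0 + t • d) ≤ 0 := convexHull_min (fun v hv ↦ hc v hv.1 hv.2)
    (convex_halfSpace_le f.isLinear 0) (hs.polarSet_subset_convexHull_ridgeLattice hE hmem)
  rw [zero_add, map_smul, smul_eq_mul] at hle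
  exact (mul_pos ht hd).not_ge hle

/-! ### Stray roots and stray pairs -/

theorem strayRoot_of_neg (hs : IsReflexiveSystem W L) (hzL : z ∈ L) (hz : z ∈ polarSet W)
    (hzR : z ∉ ridgeLattice W L) (hF : F ∈ W) (hFz : F z < 0) : StrayRoot W L F z := by
  have htight : F z = -1 := (hs.eq_neg_one_or_nonneg hF hzL hz).resolve_right hFz.not_ge
  refine ⟨hF, hzL, htight, fun η hη hne ↦ ?_, hzR⟩
  exact (hs.eq_neg_one_or_nonneg hη hzL hz).resolve_left fun h ↦
    hzR (mem_ridgeLattice_of_tight hzL hz hη hF hne h htight)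

theorem exists_strayRoot (hs : IsReflexiveSystem W L) (hzL : z ∈ L) (hz : z ∈ polarSet W)
    (hzR : z ∉ ridgeLattice W L) : ∃ F, StrayRoot W L F z := by
  obtain ⟨F, hF, hFz⟩ : ∃ F ∈ W, F z < 0 := by
    by_contra! hc
    exact hzR (hs.eq_zero_of_forall_nonneg hc ▸ zero_mem _)
  exact ⟨F, hs.strayRoot_of_neg hzL hz hzR hF hFz⟩

/-- Otherwise all the points `x + k v` would be stray roots over `F`. -/
theorem eq_zero_of_height_zero (hs : IsReflexiveSystem W L) (hx : StrayRoot W L F x)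
    (hvR : v ∈ ridgeLattice W L) (hv : v ∈ polarSet W) (hFv : F v = 0) : v = 0 := by
  have hstray (k : ℕ) : StrayRoot W L F (x + k • v) := by
    induction k with
    | zero => simpa using hx
    | succ k ih =>
      rw [succ_nsmul, ← add_assoc, add_comm]
      refine hs.strayRoot_of_neg (add_mem (ridgeLattice_le hvR) ih.mem_lattice)
        (ih.add_mem_polarSet hv hFv.ge) (fun h ↦ ih.notMem ?_) hx.facet ?_
      · exact (AddSubgroup.add_mem_cancel_left _ hvR).1 h
      · rw [map_add, hFv, ih.tight]
        norm_num
  exact hs.eq_zero_of_forall_add_nsmul_mem fun k ↦ (hstray k).mem_polarSet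

theorem exists_one_le (hs : IsReflexiveSystem W L) (hx : StrayRoot W L F x) :
    ∃ η ∈ W, 1 ≤ η x := by
  by_contra! hc
  refine neg_ne_zero.2 hx.ne_zero (hs.eq_zero_of_forall_nonneg fun η hη ↦ ?_)
  rw [map_neg, neg_nonneg]
  exact not_lt.1 fun hpos ↦ (hc η hη).not_ge (hs.one_le_of_pos hη hx.mem_lattice hpos)

theorem le_one_of_neg_nsmul_mem (hs : IsReflexiveSystem W L) (hx : StrayRoot W L F x) {k : ℕ}
    (hk : -(k • x) ∈ polarSet W) : k ≤ 1 := by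
  obtain ⟨η, hη, hηx⟩ := hs.exists_one_le hx
  have hge := hk η hη
  rw [map_neg, map_nsmul, nsmul_eq_mul] at hge
  have hle : (k : ℝ) ≤ 1 := by nlinarith [(k.cast_nonneg : (0 : ℝ) ≤ k)]
  exact_mod_cast hle

theorem add_nsmul_ne_zero (hs : IsReflexiveSystem W L) (hx : StrayRoot W L F x)
    (hvR : v ∈ ridgeLattice W L) (hv : v ∈ polarSet W) (hv0 : v ≠ 0) (k : ℕ) :
    v + k • x ≠ 0 := by
  intro h
  obtain rfl := eq_neg_of_add_eq_zero_left h
  have hk := hs.le_one_of_neg_nsmul_mem hx hv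
  interval_cases k
  · exact hv0 (by rw [zero_nsmul, neg_zero])
  · exact hx.notMem (by simpa using hvR)

/-- Sliding a point off the facet `F` along a stray root down to height `0`. -/
theorem exists_strayPair (hs : IsReflexiveSystem W L) (hx : StrayRoot W L F x)
    (hvR : v ∈ ridgeLattice W L) (hv : v ∈ polarSet W) (hv0 : v ≠ 0) (hFv : 0 ≤ F v) :
    ∃ k : ℕ, 0 < k ∧ F v = k ∧ ∃ G, StrayPair W L F G x (v + k • x) := by
  have hvL := ridgeLattice_le hvR
  obtain ⟨k, hk⟩ := hs.exists_natCast_eq hx.facet hvL hFv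
  have hk0 : 0 < k := Nat.pos_of_ne_zero <| by
    rintro rfl
    exact hv0 (hs.eq_zero_of_height_zero hx hvR hv (by simpa using hk))
  have hw : v + k • x ∈ polarSet W := hx.add_nsmul_mem_polarSet hv (by linarith)
  have hFw : F (v + k • x) = 0 := by simp [hk, hx.tight]
  have hwR : v + k • x ∉ ridgeLattice W L := fun h ↦
    hs.add_nsmul_ne_zero hx hvR hv hv0 k (hs.eq_zero_of_height_zero hx h hw hFw)
  obtain ⟨G, hG⟩ := hs.exists_strayRoot (add_mem hvL (nsmul_mem hx.mem_lattice k)) hw hwR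
  refine ⟨k, hk0, hk, G, hx, hG, hFw, le_antisymm ?_ (hx.nonneg G hG.facet ?_)⟩
  · have hk1 : ((k - 1 : ℕ) : ℝ) ≤ F v + 1 := by
      rw [hk, Nat.cast_pred hk0]
      linarith
    have hprev := hx.add_nsmul_mem_polarSet hv hk1 G hG.facet
    have htight := hG.tight
    rw [map_add, map_nsmul, nsmul_eq_mul] at hprev htight
    rw [Nat.cast_pred hk0] at hprev
    linarith
  · rintro rfl
    linarith [hG.tight]

/-- Both `y + w + x` and `x + w` lie on the ridge `F ∩ G`, hence `y` is in the ridge lattice. -/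
theorem eq_zero_of_heights_zero (hs : IsReflexiveSystem W L) (h : StrayPair W L F G x w) {y : E}
    (hyL : y ∈ L) (hy : y ∈ polarSet W) (hFy : F y = 0) (hGy : G y = 0) : y = 0 := by
  have hyw : y + w ∈ polarSet W := h.right.add_mem_polarSet hy hGy.ge
  have hFyw : F (y + w) = 0 := by rw [map_add, hFy, h.left_zero, add_zero]
  have hGyw : G (y + w) = -1 := by rw [map_add, hGy, h.right.tight, zero_add]
  have hridge : y + w + x ∈ ridgeLattice W L := mem_ridgeLattice_of_tight
    (add_mem (add_mem hyL h.right.mem_lattice) h.left.mem_lattice)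
    (h.left.add_mem_polarSet hyw hFyw.ge) h.left.facet h.right.facet h.facet_ne
    (by rw [map_add, hFyw, h.left.tight, zero_add])
    (by rw [map_add, hGyw, h.right_zero, add_zero])
  rw [add_assoc] at hridge
  have hyR := (AddSubgroup.add_mem_cancel_right _ h.symm.add_mem_ridgeLattice).1 hridge
  exact hs.eq_zero_of_height_zero h.left hyR hy hFy

theorem eq_neg_sub_of_nonneg (hs : IsReflexiveSystem W L) (h : StrayPair W L F G x w)
    (hvR : v ∈ ridgeLattice W L) (hv : v ∈ polarSet W) (hv0 : v ≠ 0) (hFv : 0 ≤ F v)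
    (hGv : 0 ≤ G v) : v = -x - w := by
  obtain ⟨k, hk0, hk, -⟩ := hs.exists_strayPair h.left hvR hv hv0 hFv
  obtain ⟨g, hg0, hg, -⟩ := hs.exists_strayPair h.right hvR hv hv0 hGv
  have hvx : v + k • x ∈ polarSet W := h.left.add_nsmul_mem_polarSet hv (by linarith)
  have hvw : v + g • w ∈ polarSet W := h.right.add_nsmul_mem_polarSet hv (by linarith)
  have hGvx : G (v + k • x) = g := by simp [hg, h.right_zero]
  have hzero : v + k • x + g • w = 0 := hs.eq_zero_of_heights_zero h
    (add_mem (add_mem (ridgeLattice_le hvR) (nsmul_mem h.left.mem_lattice k))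
      (nsmul_mem h.right.mem_lattice g))
    (h.right.add_nsmul_mem_polarSet hvx (by linarith))
    (by simp [hk, h.left.tight, h.left_zero]) (by simp [hg, h.right.tight, h.right_zero])
  have hg1 : g ≤ 1 :=
    hs.le_one_of_neg_nsmul_mem h.right (eq_neg_of_add_eq_zero_left hzero ▸ hvx)
  rw [add_right_comm] at hzero
  have hk1 : k ≤ 1 := hs.le_one_of_neg_nsmul_mem h.left (eq_neg_of_add_eq_zero_left hzero ▸ hvw)
  obtain rfl : k = 1 := by omega
  obtain rfl : g = 1 := by omega
  rw [one_nsmul, one_nsmul] at hzero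
  rw [← add_eq_zero_iff_eq_neg.1 hzero]
  abel

theorem exists_strayPair_left (hs : IsReflexiveSystem W L) (h : StrayPair W L F G x w)
    (hvR : v ∈ ridgeLattice W L) (hv : v ∈ polarSet W) (hFv : F v = -1) (hGv : 0 ≤ G v) :
    ∃ g : ℕ, 0 < g ∧ G v = g ∧ StrayPair W L F G (v + g • w) w := by
  have hv0 : v ≠ 0 := ne_zero_of_map (f := F) (by simp [hFv])
  obtain ⟨g, hg0, hg, F', hF'⟩ := hs.exists_strayPair h.right hvR hv hv0 hGv
  obtain rfl : F = F' := hF'.right.eq_of_neg h.left.facet (by simp [h.left_zero, hFv])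
  exact ⟨g, hg0, hg, hF'.symm⟩

/-! ### A point off both facets -/

theorem exists_strayRoot_neg_left (hs : IsReflexiveSystem W L) (h : StrayPair W L F G x w)
    (hP : -x - w ∈ polarSet W) : ∃ A, StrayRoot W L A (-x) ∧ A w = 0 := by
  have hneg : -x ∈ polarSet W := by
    simpa using h.right.add_mem_polarSet hP (by simp [h.right_zero, h.right.tight])
  obtain ⟨A, hA⟩ := hs.exists_strayRoot (neg_mem h.left.mem_lattice) hneg
    fun hR ↦ h.left.notMem (neg_mem_iff.1 hR)
  have hAG : A ≠ G := by
    rintro rfl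
    simpa [h.right_zero] using hA.tight
  have hle : -1 ≤ A (-x - w) := hP A hA.facet
  rw [map_sub, hA.tight] at hle
  exact ⟨A, hA, le_antisymm (by linarith) (h.right.nonneg A hA.facet hAG)⟩

/-- Comparing the two descriptions of the point off both facets that come from the pairs `x, w` and
`x, v + k x`. -/
theorem exists_eq_sub_nsmul (hs : IsReflexiveSystem W L) (h : StrayPair W L F G x w)
    (hP : -x - w ∈ polarSet W) (hvR : v ∈ ridgeLattice W L) (hv : v ∈ polarSet W)
    (hGv : G v = -1) (hFv : 0 ≤ F v) : ∃ k : ℕ, v = w - k • x := by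
  obtain ⟨k, -, -, hpair⟩ := hs.exists_strayPair_left h.symm hvR hv hGv hFv
  have hR : -x - w ∈ ridgeLattice W L := by
    rw [← neg_add']
    exact neg_mem h.add_mem_ridgeLattice
  have hF : F (-x - w) = 1 := by simp [h.left.tight, h.left_zero]
  have hG : G (-x - w) = 1 := by simp [h.right.tight, h.right_zero]
  have hne : -x - w ≠ 0 := ne_zero_of_map (f := F) (by simp [hF])
  have heq := hs.eq_neg_sub_of_nonneg hpair.symm hR hP hne (by linarith) (by linarith)
  exact ⟨k, eq_sub_of_add_eq (sub_right_injective heq).symm⟩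

theorem height_left_le_one_and_eq_or_eq (hs : IsReflexiveSystem W L) (h : StrayPair W L F G x w)
    (hP : -x - w ∈ polarSet W) (hvR : v ∈ ridgeLattice W L) (hv : v ∈ polarSet W) :
    F v ≤ 1 ∧ (F v = 1 → v = -x - w ∨ v = w - x) := by
  rcases hs.eq_neg_one_or_nonneg h.left.facet (ridgeLattice_le hvR) hv with hF | hF
  · rw [hF]
    norm_num
  rcases hs.eq_neg_one_or_nonneg h.right.facet (ridgeLattice_le hvR) hv with hG | hG
  · obtain ⟨A, hA, hAw⟩ := hs.exists_strayRoot_neg_left h hP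
    obtain ⟨k, rfl⟩ := hs.exists_eq_sub_nsmul h hP hvR hv hG hF
    have hAx : A x = 1 := by simpa [neg_eq_iff_eq_neg] using hA.tight
    have hk : -1 ≤ A (w - k • x) := hv A hA.facet
    simp only [map_sub, map_nsmul, nsmul_eq_mul, hAw, hAx, h.left_zero, h.left.tight] at hk ⊢
    refine ⟨by linarith, fun hk1 ↦ Or.inr ?_⟩
    obtain rfl : k = 1 := by exact_mod_cast (by linarith : (k : ℝ) = 1)
    rw [one_nsmul]
  · rcases eq_or_ne v 0 with rfl | hv0
    · simp
    · obtain rfl := hs.eq_neg_sub_of_nonneg h hvR hv hv0 hF hG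
      simp [h.left.tight, h.left_zero]

/-- The face of the polytope on which `F` takes its maximal value `1` is contained in the plane of
`x` and `w`. However, `-x` is a relatively interior point of a facet and can be moved out of that
plane while `F` keeps the value `1`. -/
theorem neg_sub_notMem_polarSet (hs : IsReflexiveSystem W L) (hE : 2 < Module.finrank ℝ E)
    (h : StrayPair W L F G x w) : -x - w ∉ polarSet W := by
  intro hP
  obtain ⟨A, hA, -⟩ := hs.exists_strayRoot_neg_left h hP
  obtain ⟨e, he0, hFe, hGe, hAe⟩ := exists_ne_zero_nonneg_of_two_lt_finrank hE F G A
  obtain ⟨t, ht, hp⟩ := exists_add_smul_mem_polarSet (d := e) hs.finite hA.mem_polarSet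
    fun η hη hηx ↦ by rwa [hA.eq_of_neg hη (by linarith)]
  have hface : -x + t • e ∈ convexHull ℝ {-x - w, w - x} := by
    refine convexHull_mono ?_ (mem_convexHull_inter_of_eq (f := -F) (c := -1) (fun v hv ↦ ?_)
      (hs.polarSet_subset_convexHull_ridgeLattice (by omega) hp) (by simp [h.left.tight, hFe]))
    · rintro v ⟨⟨hv, hvR⟩, hFv⟩
      exact (hs.height_left_le_one_and_eq_or_eq h hP hvR hv).2 (by simpa using hFv)
    · simpa using (hs.height_left_le_one_and_eq_or_eq h hP hv.2 hv.1).1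
  rw [convexHull_pair] at hface
  obtain ⟨a, b, -, -, hab, heq⟩ := hface
  have hG := congrArg G heq
  simp only [map_add, map_sub, map_neg, map_smul, smul_eq_mul, h.right.tight, h.right_zero,
    hGe] at hG
  obtain rfl : a = b := by linarith
  have hte : t • e = 0 := by linear_combination (norm := module) -heq - hab • x
  exact (smul_ne_zero ht.ne' he0) hte

/-! ### All points on the two facets -/

/-- A point of the ridge lattice on `H` and off `G` lies on `F`, and sliding it along `w` leads to
a point of nonnegative height over `H`. -/
theorem one_le_height_right (hs : IsReflexiveSystem W L) (hE : 1 < Module.finrank ℝ E)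
    (h : StrayPair W L F G x w) (hc : CoveredBy W L F G) (hH : H ∈ W) (hHF : H ≠ F)
    (hHG : H ≠ G) : 1 ≤ H w := by
  obtain ⟨p, hp, hHp, hlt⟩ := hs.exists_tight_only hH
  have hface := mem_convexHull_inter_of_eq (fun v hv ↦ hv.1 H hH)
    (hs.polarSet_subset_convexHull_ridgeLattice hE hp) hHp
  obtain ⟨v, ⟨⟨hv, hvR⟩, hHv⟩, hGv⟩ :
      ∃ v ∈ (polarSet W ∩ ridgeLattice W L) ∩ {v | H v = -1}, G v ≠ -1 := by
    by_contra! hG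
    have hGp : G p = -1 := convexHull_min hG (convex_hyperplane G.isLinear (-1)) hface
    exact (hlt G h.right.facet hHG.symm).ne' hGp
  replace hHv : H v = -1 := hHv
  have hv0 : v ≠ 0 := ne_zero_of_map (f := H) (by simp [hHv])
  have hGv' : 0 ≤ G v :=
    (hs.eq_neg_one_or_nonneg h.right.facet (ridgeLattice_le hvR) hv).resolve_left hGv
  obtain ⟨g, -, -, hpair⟩ := hs.exists_strayPair_left h hvR hv
    ((hc v hv hvR hv0).resolve_right hGv) hGv'
  have hHg := hpair.left.nonneg H hH hHF
  rw [map_add, map_nsmul, nsmul_eq_mul, hHv] at hHg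
  refine hs.one_le_of_pos hH h.right.mem_lattice (not_le.1 fun hneg ↦ ?_)
  linarith [mul_nonpos_of_nonneg_of_nonpos (g.cast_nonneg (α := ℝ)) hneg]

theorem exists_strayPair_max_right (hs : IsReflexiveSystem W L) (h : StrayPair W L F G x w)
    (hH : H ∈ W) : ∃ x₁ w₁, StrayPair W L F G x₁ w₁ ∧
      ∀ x₂ w₂, StrayPair W L F G x₂ w₂ → H w₂ ≤ H w₁ := by
  obtain ⟨M, hM⟩ := hs.exists_le_of_mem_polarSet H
  have hint {x₁ w₁} (h₁ : StrayPair W L F G x₁ w₁) : ∃ m : ℤ, H w₁ = m :=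
    hs.integral H hH w₁ h₁.right.mem_lattice
  obtain ⟨m, hm⟩ := hint h
  obtain ⟨b, ⟨x₁, w₁, h₁, hb⟩, hmax⟩ := Int.exists_greatest_of_bdd
    (P := fun m : ℤ ↦ ∃ x₁ w₁, StrayPair W L F G x₁ w₁ ∧ H w₁ = m)
    ⟨⌊M⌋, fun m ⟨_, _, h₁, hm⟩ ↦ Int.le_floor.2 (hm ▸ hM _ h₁.right.mem_polarSet)⟩
    ⟨m, x, w, h, hm⟩
  refine ⟨x₁, w₁, h₁, fun x₂ w₂ h₂ ↦ ?_⟩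
  obtain ⟨m₂, hm₂⟩ := hint h₂
  rw [hb, hm₂]
  exact_mod_cast hmax m₂ ⟨x₂, w₂, h₂, hm₂⟩

theorem succ_nsmul_right_mem_ridgeLattice {g : ℕ} (hvR : v ∈ ridgeLattice W L)
    (h : StrayPair W L F G (v + g • w) w) : (g + 1) • w ∈ ridgeLattice W L := by
  refine (AddSubgroup.add_mem_cancel_left _ hvR).1 ?_
  rw [succ_nsmul, ← add_assoc]
  exact h.add_mem_ridgeLattice

theorem not_height_eq_two_and_one {g k : ℕ} (h : StrayPair W L F G x w)
    (hvR : v ∈ ridgeLattice W L) (hv'R : v' ∈ ridgeLattice W L)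
    (hg : StrayPair W L F G (v + g • w) w) (hk : StrayPair W L G F (v' + k • x) x) :
    ¬(g = 2 ∧ k = 1) := by
  rintro ⟨rfl, rfl⟩
  have hw : 3 • w ∈ ridgeLattice W L := succ_nsmul_right_mem_ridgeLattice hvR hg
  have hx : 2 • x ∈ ridgeLattice W L := succ_nsmul_right_mem_ridgeLattice hv'R hk
  have hxw := nsmul_mem h.add_mem_ridgeLattice 2
  refine h.right.notMem ?_
  convert sub_mem (add_mem hw hx) hxw using 1
  module

/-- With `g = G v` and `k = F v'`, the maximal heights `a` and `b` over `H` of left and right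
members of stray pairs satisfy `g b ≤ a + 1` and `k a ≤ b + 1`, which forces `b = 1`. -/
theorem height_right_eq_one (hs : IsReflexiveSystem W L) (hE : 1 < Module.finrank ℝ E)
    (h : StrayPair W L F G x w) (hc : CoveredBy W L F G) (hvR : v ∈ ridgeLattice W L)
    (hv : v ∈ polarSet W) (hFv : F v = -1) (hGv : 1 < G v) (hv'R : v' ∈ ridgeLattice W L)
    (hv' : v' ∈ polarSet W) (hGv' : G v' = -1) (hFv' : 0 ≤ F v') (hH : H ∈ W) (hHF : H ≠ F)
    (hHG : H ≠ G) : H w = 1 := by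
  obtain ⟨x₁, w₁, h₁, hb⟩ := hs.exists_strayPair_max_right h hH
  obtain ⟨w₂, x₂, h₂, ha⟩ := hs.exists_strayPair_max_right h.symm hH
  obtain ⟨g, -, hg, hpair⟩ := hs.exists_strayPair_left h hvR hv hFv (by linarith)
  obtain ⟨k, hk0, hk, hpair'⟩ := hs.exists_strayPair_left h.symm hv'R hv' hGv' hFv'
  obtain ⟨g₁, -, hg₁, hpair₁⟩ := hs.exists_strayPair_left h₁ hvR hv hFv (by linarith)
  obtain ⟨k₂, -, hk₂, hpair₂⟩ := hs.exists_strayPair_left h₂ hv'R hv' hGv' hFv'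
  obtain rfl : g₁ = g := by exact_mod_cast hg₁.symm.trans hg
  obtain rfl : k₂ = k := by exact_mod_cast hk₂.symm.trans hk
  have hg2 : 2 ≤ g₁ := by exact_mod_cast hg ▸ hGv
  have ha1 : 1 ≤ H x₂ := hs.one_le_height_right hE h₂ hc.symm hH hHG hHF
  have hb1 : 1 ≤ H w₁ := hs.one_le_height_right hE h₁ hc hH hHF hHG
  have hgb := ha _ _ hpair₁.symm
  have hka := hb _ _ hpair₂.symm
  simp only [map_add, map_nsmul, nsmul_eq_mul] at hgb hka
  refine le_antisymm ((hb x w h).trans ?_) (hs.one_le_height_right hE h hc hH hHF hHG)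
  exact le_one_of_natCast_mul_le_add_one (a := H x₂) (by linarith) (by linarith) hg2 hk0
    (not_height_eq_two_and_one h hvR hv'R hpair hpair') (by linarith [hv H hH])
    (by linarith [hv' H hH])

/-- Otherwise `-w` would be a point of the polytope on every facet other than `F` and `G`. As there
is only one such facet, the dimension would be at most two. -/
theorem exists_height_right_ne_one (hs : IsReflexiveSystem W L) (hE : 2 < Module.finrank ℝ E)
    (h : StrayPair W L F G x w) : ∃ H ∈ W, H ≠ F ∧ H ≠ G ∧ H w ≠ 1 := by
  by_contra! hone
  have hneg : -w ∈ polarSet W := by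
    intro η hη
    rw [map_neg]
    rcases eq_or_ne η F with rfl | hηF
    · simp [h.left_zero]
    rcases eq_or_ne η G with rfl | hηG
    · simp [h.right.tight]
    · rw [hone η hη hηF hηG]
  obtain ⟨A, hA⟩ := hs.exists_strayRoot (neg_mem h.right.mem_lattice) hneg
    fun hR ↦ h.right.notMem (neg_mem_iff.1 hR)
  obtain ⟨e, he0, hFe, hGe, hAe⟩ := exists_ne_zero_nonneg_of_two_lt_finrank hE F G A
  refine he0 (hs.eq_zero_of_forall_nonneg fun η hη ↦ ?_)
  by_cases hηF : η = F
  · rw [hηF, hFe]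
  by_cases hηG : η = G
  · rw [hηG, hGe]
  obtain rfl : η = A := hA.eq_of_neg hη (by simp [hone η hη hηF hηG])
  exact hAe

theorem height_le_one_of_coveredBy (hs : IsReflexiveSystem W L) (hE : 2 < Module.finrank ℝ E)
    (h : StrayPair W L F G x w) (hc : CoveredBy W L F G) (hvR : v ∈ ridgeLattice W L)
    (hv : v ∈ polarSet W) (hFv : F v = -1) : G v ≤ 1 := by
  by_contra! hGv
  have hE' : 1 < Module.finrank ℝ E := by omega
  obtain ⟨v', hv', hv'R, hFv'⟩ := hs.exists_mem_ridgeLattice_pos hE' h.left.facet_ne_zero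
  have hGv' : G v' = -1 :=
    (hc v' hv' hv'R (ne_zero_of_map hFv'.ne')).resolve_left (by linarith)
  obtain ⟨H, hH, hHF, hHG, hne⟩ := hs.exists_height_right_ne_one hE h
  exact hne (hs.height_right_eq_one hE' h hc hvR hv hFv hGv hv'R hv' hGv' hFv'.le hH hHF hHG)

theorem not_coveredBy (hs : IsReflexiveSystem W L) (hE : 2 < Module.finrank ℝ E)
    (h : StrayPair W L F G x w) : ¬CoveredBy W L F G := by
  intro hc
  have hFG : F + G ≠ 0 := by
    intro hzero
    simpa [h.left.tight, h.right_zero] using LinearMap.congr_fun hzero x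
  obtain ⟨v, hv, hvR, hpos⟩ := hs.exists_mem_ridgeLattice_pos (by omega) hFG
  have hv0 : v ≠ 0 := ne_zero_of_map hpos.ne'
  rw [LinearMap.add_apply] at hpos
  rcases hc v hv hvR hv0 with hF | hG
  · linarith [hs.height_le_one_of_coveredBy hE h hc hvR hv hF]
  · linarith [hs.height_le_one_of_coveredBy hE h.symm hc.symm hvR hv hG]

theorem mem_ridgeLattice (hs : IsReflexiveSystem W L) (hE : 2 < Module.finrank ℝ E)
    (hzL : z ∈ L) (hz : z ∈ polarSet W) : z ∈ ridgeLattice W L := by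
  by_contra hzR
  obtain ⟨F, hF⟩ := hs.exists_strayRoot hzL hz hzR
  obtain ⟨v, hv, hvR, hFv⟩ := hs.exists_mem_ridgeLattice_pos (by omega) hF.facet_ne_zero
  obtain ⟨k, -, -, G, h⟩ := hs.exists_strayPair hF hvR hv (ne_zero_of_map hFv.ne') hFv.le
  refine hs.not_coveredBy hE h fun u hu huR hu0 ↦ ?_
  rcases hs.eq_neg_one_or_nonneg h.left.facet (ridgeLattice_le huR) hu with hFu | hFu
  · exact Or.inl hFu
  rcases hs.eq_neg_one_or_nonneg h.right.facet (ridgeLattice_le huR) hu with hGu | hGu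
  · exact Or.inr hGu
  · obtain rfl := hs.eq_neg_sub_of_nonneg h huR hu hu0 hFu hGu
    exact (hs.neg_sub_notMem_polarSet hE h hu).elim

end IsReflexiveSystem

end ReflexiveSystem

section Polytope

theorem polarSet_dual_eq {E : Type*} [AddCommGroup E] [Module ℝ E] [TopologicalSpace E]
    [IsTopologicalAddGroup E] [ContinuousSMul ℝ E] [LocallyConvexSpace ℝ E] {P : Set E}
    (hconv : Convex ℝ P) (hclosed : IsClosed P) (h0 : 0 ∈ P) :
    polarSet {η : Module.Dual ℝ E | ∀ p ∈ P, -1 ≤ η p} = P := by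
  refine Set.Subset.antisymm (fun z hz ↦ ?_) fun z hz η hη ↦ hη z hz
  by_contra hzP
  obtain ⟨f, u, hfu, hu⟩ := geometric_hahn_banach_closed_point hconv hclosed hzP
  have hu0 : 0 < u := by simpa using hfu 0 h0
  have hdual (p : E) : -1 ≤ (-u⁻¹ • (f : Module.Dual ℝ E)) p ↔ f p ≤ u := by
    simp [inv_mul_le_iff₀ hu0]
  exact hu.not_ge ((hdual z).1 (hz _ fun p hp ↦ (hdual p).2 (hfu p hp).le))

theorem isExposed_inter_setOf_eq {E : Type*} [AddCommGroup E] [Module ℝ E] [TopologicalSpace E]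
    {P : Set E} {f : StrongDual ℝ E} {c : ℝ} (hf : ∀ p ∈ P, c ≤ f p) :
    IsExposed ℝ P (P ∩ {p | f p = c}) := by
  rintro ⟨z, hz, hfz⟩
  refine ⟨-f, Set.ext fun p ↦ and_congr_right fun hp ↦ ?_⟩
  simp only [Set.mem_ofPred_eq, neg_apply, neg_le_neg_iff] at hfz ⊢
  exact ⟨fun h y hy ↦ h.trans_le (hf y hy), fun h ↦ ((h z hz).trans_eq hfz).antisymm (hf p hp)⟩

theorem finrank_vectorSpan_add_two_le {E : Type*} [AddCommGroup E] [Module ℝ E]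
    [FiniteDimensional ℝ E] {η η' : Module.Dual ℝ E} {S : Set E} {z : E} (hne : η ≠ η')
    (hz : z ∈ S) (hη : ∀ p ∈ S, η p = -1) (hη' : ∀ p ∈ S, η' p = -1) :
    Module.finrank ℝ (vectorSpan ℝ S) + 2 ≤ Module.finrank ℝ E := by
  have hη0 : η ≠ 0 := by
    rintro rfl
    simpa using hη z hz
  have hindep : LinearIndependent ℝ ![η, η'] := by
    refine (LinearIndependent.pair_iff' hη0).2 fun a ha ↦ hne ?_
    have haz := LinearMap.congr_fun ha z
    rw [LinearMap.smul_apply, hη z hz, hη' z hz, smul_eq_mul] at haz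
    obtain rfl : a = 1 := by linarith
    rw [← ha, one_smul]
  have hspan : vectorSpan ℝ S ≤ (Submodule.span ℝ (Set.range ![η, η'])).dualCoannihilator := by
    rw [vectorSpan, Submodule.span_le, Submodule.coe_dualCoannihilator_span]
    rintro _ ⟨p, hp, q, hq, rfl⟩
    simp [hη p hp, hη q hq, hη' p hp, hη' q hq]
  have hrank := Subspace.finrank_add_finrank_dualCoannihilator_eq
    (Submodule.span ℝ (Set.range ![η, η']))
  rw [finrank_span_eq_card hindep, Fintype.card_fin] at hrank
  linarith [Submodule.finrank_mono hspan]

variable {n : ℕ}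

theorem mem_latticeSubgroup {z : Fin n → ℝ} : z ∈ latticeSubgroup n ↔ IsLatticePt z := by
  refine ⟨fun hz ↦ ?_, fun hz ↦ AddSubgroup.subset_closure hz⟩
  induction hz using AddSubgroup.closure_induction with
  | mem _ hz => exact hz
  | zero => exact fun i ↦ ⟨0, by simp⟩
  | add x y _ _ hx hy =>
    intro i
    obtain ⟨a, ha⟩ := hx i
    obtain ⟨b, hb⟩ := hy i
    exact ⟨a + b, by simp [ha, hb]⟩
  | neg x _ hx =>
    intro i
    obtain ⟨a, ha⟩ := hx i
    exact ⟨-a, by simp [ha]⟩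

theorem IsLatticePt.exists_dotProduct_eq {y z : Fin n → ℝ} (hy : IsLatticePt y)
    (hz : IsLatticePt z) : ∃ m : ℤ, y ⬝ᵥ z = m := by
  choose a ha using hy
  choose b hb using hz
  exact ⟨a ⬝ᵥ b, by simp [dotProduct, ha, hb]⟩

theorem image_dotProductEquiv_dualPolytope (P : Set (Fin n → ℝ)) :
    dotProductEquiv ℝ (Fin n) '' dualPolytope P =
      {η : Module.Dual ℝ (Fin n → ℝ) | ∀ p ∈ P, -1 ≤ η p} := by
  ext η
  obtain ⟨y, rfl⟩ := (dotProductEquiv ℝ (Fin n)).surjective η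
  rw [(dotProductEquiv ℝ (Fin n)).injective.mem_set_image]
  refine forall₂_congr fun p _ ↦ ?_
  rw [dotProductEquiv_apply_apply, dotProduct_comm]
  rfl

theorem IsReflexive.exists_isReflexiveSystem {P : Set (Fin n → ℝ)} (hP : IsReflexive P) :
    ∃ W, IsReflexiveSystem W (latticeSubgroup n) ∧ polarSet W = P := by
  obtain ⟨⟨V, hVfin, hV, hPV⟩, hint, U, hUfin, hU, hPU⟩ := hP
  have hclosed : IsClosed P := hPV ▸ (hVfin.isCompact_convexHull ℝ).isClosed
  have hconv : Convex ℝ P := hPV ▸ convex_convexHull ℝ V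
  have hbidual := polarSet_dual_eq hconv hclosed (interior_subset hint)
  rw [← image_dotProductEquiv_dualPolytope, hPU, ← LinearEquiv.coe_toLinearMap,
    LinearMap.image_convexHull, polarSet_convexHull] at hbidual
  have hfin := hUfin.image (dotProductEquiv ℝ (Fin n)).toLinearMap
  obtain ⟨W, hWU, hW, hirr⟩ := exists_subset_polarSet_eq_irredundant hfin
  refine ⟨W, ⟨hfin.subset hWU, fun η hη z hz ↦ ?_, hirr, V, hVfin, fun v hv ↦ ?_, ?_⟩,
    hW.trans hbidual⟩
  · obtain ⟨y, hy, rfl⟩ := hWU hη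
    exact (hU y hy).exists_dotProduct_eq (mem_latticeSubgroup.1 hz)
  · exact mem_latticeSubgroup.2 (hV v hv)
  · rw [hW, hbidual, hPV]

theorem ridgeLattice_le_skeletonLattice (W : Set (Module.Dual ℝ (Fin n → ℝ))) :
    ridgeLattice W (latticeSubgroup n) ≤ skeletonLattice (polarSet W) (n - 2) := by
  refine (AddSubgroup.closure_le _).2 ?_
  rintro z ⟨hzL, hz, η, hη, η', hη', hne, hηz, hη'z⟩
  have hge : ∀ p ∈ polarSet W, -2 ≤ (η + η').toContinuousLinearMap p := fun p hp ↦
    show -2 ≤ η p + η' p by linarith [hp η hη, hp η' hη']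
  have hzF : z ∈ polarSet W ∩ {p | (η + η').toContinuousLinearMap p = -2} :=
    ⟨hz, show η z + η' z = -2 by rw [hηz, hη'z]; norm_num⟩
  have htight : ∀ p ∈ polarSet W ∩ {p | (η + η').toContinuousLinearMap p = -2},
      η p = -1 ∧ η' p = -1 := by
    rintro p ⟨hp, hsum⟩
    replace hsum : η p + η' p = -2 := hsum
    constructor <;> linarith [hp η hη, hp η' hη']
  have hdim := finrank_vectorSpan_add_two_le hne hzF (fun p hp ↦ (htight p hp).1)
    fun p hp ↦ (htight p hp).2
  rw [Module.finrank_fin_fun] at hdim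
  exact AddSubgroup.subset_closure
    ⟨mem_latticeSubgroup.1 hzL, _, isExposed_inter_setOf_eq hge, by omega, hzF⟩

theorem skeletonLattice_mono (P : Set (Fin n → ℝ)) : Monotone (skeletonLattice P) :=
  fun _ _ hkl ↦ AddSubgroup.closure_mono
    fun _ ⟨hz, F, hF, hdim, hzF⟩ ↦ ⟨hz, F, hF, hdim.trans hkl, hzF⟩

theorem IsReflexive.mem_skeletonLattice (hn : 3 ≤ n) {P : Set (Fin n → ℝ)} (hP : IsReflexive P)
    {z : Fin n → ℝ} (hz : IsLatticePt z) (hzP : z ∈ P) : z ∈ skeletonLattice P (n - 2) := by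
  obtain ⟨W, hW, rfl⟩ := hP.exists_isReflexiveSystem
  have hE : 2 < Module.finrank ℝ (Fin n → ℝ) := by rwa [Module.finrank_fin_fun]
  exact ridgeLattice_le_skeletonLattice W
    (hW.mem_ridgeLattice hE (mem_latticeSubgroup.2 hz) hzP)

end Polytope

/-- **Theorem (Haase–Nill).** For an `n`-dimensional reflexive polytope with `n ≥ 3`,
the lattice generated by lattice points in the `(n-2)`-skeleton equals the lattice
generated by lattice points in the `(n-1)`-skeleton (the boundary): `Λ_{n-2} = Λ_{n-1}`. -/
theorem skeletonLattice_codim_two_eq {n : ℕ} (hn : 3 ≤ n) (P : Set (Fin n → ℝ))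
    (hP : IsReflexive P) :
    skeletonLattice P (n - 2) = skeletonLattice P (n - 1) := by
  refine le_antisymm (skeletonLattice_mono P (by omega)) ((AddSubgroup.closure_le _).2 ?_)
  rintro z ⟨hz, F, hF, -, hzF⟩
  exact hP.mem_skeletonLattice hn hz (IsExposed.subset hF hzF)
end

section
/- Let P ⊆ ℝ^n be an n-dimensional reflexive polytope with respect to ℤ^n, and let x, y be lattice points on the boundary of P. Then exactly one of the following three alternatives holds: (i) x and y belong to a common facet of P; (ii) x + y = 0; (iii) x + y lies on the boundary of P. -/
/-!
If the dual `P*` is a lattice polytope, then by the bipolar theorem and Krein–Milman `P` is cut out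
by the inequalities `⟨η, ·⟩ ≥ -1`, where `η` runs over the vertices of `P*`. These `η` are lattice
points, and each of them cuts out a facet of `P`: since `η` is an exposed point of `P*`, some
`p ∈ P` satisfies `⟨η, p⟩ = -1` with all the other inequalities strict, so that a neighbourhood of
`p` in the hyperplane `⟨η, ·⟩ = -1` lies in `P`.

If `x` and `y` lie on no common facet, then for each `η` the integers `⟨η, x⟩, ⟨η, y⟩ ≥ -1` are not
both `-1`, so `⟨η, x + y⟩ ≥ -1`; hence `x + y ∈ P`. At an interior lattice point every `⟨η, ·⟩` is
an integer `> -1`, hence `≥ 0`, so the whole ray through it stays in the bounded set `P`: the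
point is `0`. Conversely, a functional exposing a facet is positive on it, so the sum of two of its
points exceeds the maximum of the functional over `P`.
-/

section Convex

open Topology

theorem extremePoints_convexHull_subset_exposedPoints {E : Type*} [AddCommGroup E] [Module ℝ E]
    [TopologicalSpace E] [IsTopologicalAddGroup E] [ContinuousSMul ℝ E] [LocallyConvexSpace ℝ E]
    [T2Space E] {V : Set E} (hV : V.Finite) :
    (convexHull ℝ V).extremePoints ℝ ⊆ (convexHull ℝ V).exposedPoints ℝ := by
  intro w hw
  have hwV : w ∈ V := extremePoints_convexHull_subset hw
  have hw_notMem : w ∉ convexHull ℝ (V \ {w}) := fun h =>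
    ((convex_convexHull ℝ V).mem_extremePoints_iff_mem_sdiff_convexHull_sdiff.mp hw).2
      (convexHull_mono (Set.sdiff_subset_sdiff_left (subset_convexHull ℝ V)) h)
  obtain ⟨f, u, hfu, huw⟩ := geometric_hahn_banach_closed_point (convex_convexHull ℝ _)
    ((hV.subset Set.sdiff_subset).isCompact_convexHull ℝ).isClosed hw_notMem
  refine ⟨hw.1, f, fun q hq => ?_⟩
  rw [← Set.insert_sdiff_self_of_mem hwV] at hq
  rcases (V \ {w}).eq_empty_or_nonempty with hempty | hne
  · have hqw : q = w := by simpa [hempty] using hq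
    simp [hqw]
  · rw [convexHull_insert hne, convexJoin_singleton_left, Set.mem_iUnion₂] at hq
    obtain ⟨b, hb, s, t, -, ht, hst, rfl⟩ := hq
    have hbw : f b < f w := (hfu b hb).trans huw
    have hfq : f (s • w + t • b) = f w - t * (f w - f b) := by
      simp only [map_add, map_smul, smul_eq_mul]
      linear_combination f w * hst
    rw [hfq]
    refine ⟨by nlinarith, fun hle => ?_⟩
    obtain rfl : t = 0 := by nlinarith
    simp [show s = 1 by linarith]

theorem exists_pos_of_isExposed_of_zero_mem_interior {E : Type*} [NormedAddCommGroup E]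
    [NormedSpace ℝ E] {A B : Set E} (hAB : IsExposed ℝ A B) (hB : B.Nonempty) (hne : B ≠ A)
    (h0 : (0 : E) ∈ interior A) :
    ∃ (l : StrongDual ℝ E) (c : ℝ), 0 < c ∧ (∀ a ∈ A, l a ≤ c) ∧ ∀ b ∈ B, l b = c := by
  obtain ⟨l, rfl⟩ := hAB hB
  obtain ⟨b, hbA, hb⟩ := hB
  have hlb : 0 ≤ l b := by simpa using hb 0 (interior_subset h0)
  refine ⟨l, l b, hlb.lt_of_ne fun hlb0 => hne ?_, hb,
    fun b' hb' => le_antisymm (hb b' hb'.1) (hb'.2 b hbA)⟩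
  have hmax : IsLocalMax l 0 := by
    filter_upwards [mem_interior_iff_mem_nhds.mp h0] with a ha
    simpa [hlb0] using hb a ha
  have hl : l = 0 := hmax.hasFDerivAt_eq_zero l.hasFDerivAt
  simp [hl]

theorem exists_one_lt_smul_mem_of_mem_interior {E : Type*} [AddCommGroup E] [Module ℝ E]
    [TopologicalSpace E] [ContinuousSMul ℝ E] {A : Set E} {z : E} (hz : z ∈ interior A) :
    ∃ t : ℝ, 1 < t ∧ t • z ∈ A := by
  have hcont : ContinuousAt (fun t : ℝ => t • z) 1 := by fun_prop
  have hev : ∀ᶠ t in 𝓝[>] (1 : ℝ), t • z ∈ A :=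
    (hcont.eventually (by simpa using mem_interior_iff_mem_nhds.mp hz)).filter_mono
      nhdsWithin_le_nhds
  exact (eventually_mem_nhdsWithin.and hev).exists

end Convex

section Pairing

variable {n : ℕ}

lemma dotProd_comm (x y : Fin n → ℝ) : dotProd x y = dotProd y x := dotProduct_comm x y

lemma dotProd_add (x y z : Fin n → ℝ) : dotProd x (y + z) = dotProd x y + dotProd x z :=
  dotProduct_add x y z

lemma dotProd_smul (t : ℝ) (x y : Fin n → ℝ) : dotProd x (t • y) = t * dotProd x y :=
  dotProduct_smul t x y

@[fun_prop]
lemma continuous_dotProd (x : Fin n → ℝ) : Continuous (dotProd x) := by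
  unfold dotProd
  fun_prop

lemma exists_eq_dotProd (l : StrongDual ℝ (Fin n → ℝ)) : ∃ u, ∀ v, l v = dotProd u v := by
  obtain ⟨u, hu⟩ := (dotProductEquiv ℝ (Fin n)).surjective l.toLinearMap
  exact ⟨u, fun v => (LinearMap.congr_fun hu v).symm⟩

end Pairing

namespace IsLatticePt

variable {n : ℕ} {x y : Fin n → ℝ}

lemma add (hx : IsLatticePt x) (hy : IsLatticePt y) : IsLatticePt (x + y) := fun i => by
  obtain ⟨a, ha⟩ := hx i
  obtain ⟨b, hb⟩ := hy i
  exact ⟨a + b, by simp [ha, hb]⟩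

lemma exists_dotProd_eq_intCast (hx : IsLatticePt x) (hy : IsLatticePt y) :
    ∃ m : ℤ, dotProd x y = m := by
  choose a ha using hx
  choose b hb using hy
  exact ⟨∑ i, a i * b i, by simp [dotProd, ha, hb]⟩

end IsLatticePt

namespace IsLatticePolytope

variable {n : ℕ} {Q : Set (Fin n → ℝ)}

lemma isCompact (hQ : IsLatticePolytope Q) : IsCompact Q := by
  obtain ⟨V, hV, -, rfl⟩ := hQ
  exact hV.isCompact_convexHull ℝ

lemma convex (hQ : IsLatticePolytope Q) : Convex ℝ Q := by
  obtain ⟨V, -, -, rfl⟩ := hQ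
  exact convex_convexHull ℝ V

lemma finite_extremePoints (hQ : IsLatticePolytope Q) : (Q.extremePoints ℝ).Finite := by
  obtain ⟨V, hV, -, rfl⟩ := hQ
  exact hV.subset extremePoints_convexHull_subset

lemma isLatticePt_of_mem_extremePoints (hQ : IsLatticePolytope Q) {v : Fin n → ℝ}
    (hv : v ∈ Q.extremePoints ℝ) : IsLatticePt v := by
  obtain ⟨V, -, hVlat, rfl⟩ := hQ
  exact hVlat v (extremePoints_convexHull_subset hv)

lemma convexHull_extremePoints (hQ : IsLatticePolytope Q) :
    convexHull ℝ (Q.extremePoints ℝ) = Q := by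
  rw [← (hQ.finite_extremePoints.isCompact_convexHull ℝ).isClosed.closure_eq,
    closure_convexHull_extremePoints hQ.isCompact hQ.convex]

end IsLatticePolytope

section Dual

variable {n : ℕ} {P S T V : Set (Fin n → ℝ)}

lemma subset_dualPolytope_comm : S ⊆ dualPolytope T ↔ T ⊆ dualPolytope S := by
  constructor <;> exact fun h a ha b hb => dotProd_comm a b ▸ h hb a ha

lemma subset_dualPolytope_dualPolytope : S ⊆ dualPolytope (dualPolytope S) :=
  subset_dualPolytope_comm.mp subset_rfl

lemma zero_mem_dualPolytope : 0 ∈ dualPolytope S := fun x _ => by simp [dotProd]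

lemma convex_dualPolytope : Convex ℝ (dualPolytope S) := by
  intro a ha b hb s t hs ht hst x hx
  rw [dotProd_add, dotProd_smul, dotProd_smul]
  nlinarith [ha x hx, hb x hx]

lemma dualPolytope_convexHull : dualPolytope (convexHull ℝ S) = dualPolytope S :=
  Set.Subset.antisymm (fun _ hy x hx => hy x (subset_convexHull ℝ S hx)) <|
    subset_dualPolytope_comm.mp <|
      convexHull_min subset_dualPolytope_dualPolytope convex_dualPolytope

theorem dualPolytope_dualPolytope (hconv : Convex ℝ P) (hclosed : IsClosed P) (h0 : 0 ∈ P) :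
    dualPolytope (dualPolytope P) = P := by
  refine Set.Subset.antisymm (fun z hz => ?_) subset_dualPolytope_dualPolytope
  by_contra hzP
  obtain ⟨f, u, hfu, huz⟩ := geometric_hahn_banach_closed_point hconv hclosed hzP
  have hu : 0 < u := by simpa using hfu 0 h0
  obtain ⟨w, hw⟩ := exists_eq_dotProd f
  have hdot (v : Fin n → ℝ) : dotProd v (-u⁻¹ • w) = -(f v / u) := by
    rw [dotProd_smul, dotProd_comm, ← hw]
    ring
  have hmem : -u⁻¹ • w ∈ dualPolytope P := fun v hv => by
    rw [hdot, neg_le_neg_iff, div_le_one hu]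
    exact (hfu v hv).le
  have hle := hz _ hmem
  rw [dotProd_comm, hdot, neg_le_neg_iff, div_le_one hu] at hle
  exact hle.not_gt huz

lemma eq_zero_of_forall_dotProd_nonneg (hbdd : Bornology.IsBounded (dualPolytope S))
    {z : Fin n → ℝ} (hz : ∀ s ∈ S, 0 ≤ dotProd s z) : z = 0 := by
  have hray (t : ℝ) (ht : 0 ≤ t) : t • z ∈ dualPolytope S := fun s hs => by
    rw [dotProd_smul]
    linarith [mul_nonneg ht (hz s hs)]
  obtain ⟨R, hR⟩ := hbdd.exists_norm_le
  by_contra hne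
  have hpos : 0 < ‖z‖ := norm_pos_iff.mpr hne
  have hR0 : 0 ≤ R := (norm_nonneg _).trans (hR 0 zero_mem_dualPolytope)
  have hle := hR _ (hray ((R + 1) / ‖z‖) (by positivity))
  rw [norm_smul, Real.norm_of_nonneg (by positivity), div_mul_cancel₀ _ hpos.ne'] at hle
  linarith

lemma neg_one_lt_dotProd_of_mem_interior {z s : Fin n → ℝ} (hz : z ∈ interior (dualPolytope S))
    (hs : s ∈ S) : -1 < dotProd s z := by
  obtain ⟨t, ht, htz⟩ := exists_one_lt_smul_mem_of_mem_interior hz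
  have hle := htz s hs
  rw [dotProd_smul] at hle
  nlinarith

-- A functional exposing `0` would give a ray in the bounded dual, unless it vanishes and `V ⊆ {0}`.
lemma ne_zero_of_mem_extremePoints_convexHull (hn : n ≠ 0) (hV : V.Finite)
    (hbdd : Bornology.IsBounded (dualPolytope V)) {η : Fin n → ℝ}
    (hη : η ∈ (convexHull ℝ V).extremePoints ℝ) : η ≠ 0 := by
  rintro rfl
  obtain ⟨-, l, hl⟩ := extremePoints_convexHull_subset_exposedPoints hV hη
  obtain ⟨u, hu⟩ := exists_eq_dotProd l
  have hl_nonpos (v : Fin n → ℝ) (hv : v ∈ V) : l v ≤ 0 := by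
    simpa using (hl v (subset_convexHull ℝ V hv)).1
  have hu0 : u = 0 := by
    have hneg : (-1 : ℝ) • u = 0 := eq_zero_of_forall_dotProd_nonneg hbdd fun v hv => by
      rw [dotProd_smul, dotProd_comm, ← hu]
      linarith [hl_nonpos v hv]
    simpa using hneg
  have hV0 (v : Fin n → ℝ) (hv : v ∈ V) : v = 0 :=
    (hl v (subset_convexHull ℝ V hv)).2 (by simp [hu, hu0, dotProd])
  have : NeZero n := ⟨hn⟩
  exact one_ne_zero (α := Fin n → ℝ) <| eq_zero_of_forall_dotProd_nonneg hbdd fun v hv => by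
    simp [hV0 v hv, dotProd]

end Dual

section Facets

variable {n : ℕ} {P V : Set (Fin n → ℝ)} {η p : Fin n → ℝ}

/-- The set of points of `P` at which the inequality `⟨η, ·⟩ ≥ -1` is an equality: the face of `P`
dual to the point `η` of `P*`. -/
def dualFace (P : Set (Fin n → ℝ)) (η : Fin n → ℝ) : Set (Fin n → ℝ) :=
  {p ∈ P | dotProd η p = -1}

lemma isExposed_dualFace (hη : η ∈ dualPolytope P) : IsExposed ℝ P (dualFace P η) := by
  rintro ⟨p, hpP, hp⟩
  have hle {q : Fin n → ℝ} (hq : q ∈ P) : -1 ≤ dotProd η q := dotProd_comm q η ▸ hη q hq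
  refine ⟨-(dotProductEquiv ℝ (Fin n) η).toContinuousLinearMap, ?_⟩
  ext q
  refine and_congr_right fun hq => ?_
  change dotProd η q = -1 ↔ ∀ r ∈ P, -dotProd η r ≤ -dotProd η q
  refine ⟨fun hq1 r hr => ?_, fun hmax => ?_⟩
  · linarith [hle hr]
  · linarith [hle hq, hmax p hpP]

lemma exists_dotProd_eq_neg_one_forall_lt (hV : V.Finite) (h0 : 0 ∈ convexHull ℝ V)
    (hη : η ∈ (convexHull ℝ V).extremePoints ℝ) (hη0 : η ≠ 0) :
    ∃ p, dotProd η p = -1 ∧ ∀ v ∈ V, v ≠ η → -1 < dotProd v p := by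
  obtain ⟨-, l, hl⟩ := extremePoints_convexHull_subset_exposedPoints hV hη
  have hlt {q : Fin n → ℝ} (hq : q ∈ convexHull ℝ V) (hqη : q ≠ η) : l q < l η :=
    lt_of_not_ge fun hle => hqη ((hl q hq).2 hle)
  have hlη : 0 < l η := by simpa using hlt h0 hη0.symm
  obtain ⟨u, hu⟩ := exists_eq_dotProd l
  have hdot (v : Fin n → ℝ) : dotProd v (-(l η)⁻¹ • u) = -(l v / l η) := by
    rw [dotProd_smul, dotProd_comm, ← hu]
    ring
  refine ⟨-(l η)⁻¹ • u, by rw [hdot, div_self hlη.ne'], fun v hv hvη => ?_⟩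
  rw [hdot, neg_lt_neg_iff, div_lt_one hlη]
  exact hlt (subset_convexHull ℝ V hv) hvη

lemma mem_dualFace_of_forall_lt (hp : dotProd η p = -1)
    (hlt : ∀ v ∈ V, v ≠ η → -1 < dotProd v p) : p ∈ dualFace (dualPolytope V) η := by
  refine ⟨fun v hv => ?_, hp⟩
  rcases eq_or_ne v η with rfl | hvη
  · exact hp.ge
  · exact (hlt v hv hvη).le

lemma vectorSpan_dualFace (hV : V.Finite) (hp : dotProd η p = -1)
    (hlt : ∀ v ∈ V, v ≠ η → -1 < dotProd v p) :
    vectorSpan ℝ (dualFace (dualPolytope V) η) = (dotProductEquiv ℝ (Fin n) η).ker := by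
  apply le_antisymm
  · rw [vectorSpan_def, Submodule.span_le]
    rintro _ ⟨a, ha, b, hb, rfl⟩
    change dotProductEquiv ℝ (Fin n) η (a - b) = 0
    rw [map_sub, sub_eq_zero]
    exact ha.2.trans hb.2.symm
  intro u (hu : dotProd η u = 0)
  have hev : ∀ᶠ ε in nhdsWithin (0 : ℝ) {0}ᶜ, ∀ v ∈ V, v ≠ η → -1 < dotProd v (p + ε • u) := by
    refine ((Filter.eventually_all_finite hV).mpr fun v hv => ?_).filter_mono nhdsWithin_le_nhds
    refine Filter.eventually_imp_distrib_left.mpr fun hvη => ?_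
    have hcont : ContinuousAt (fun ε : ℝ => dotProd v (p + ε • u)) 0 := by fun_prop
    exact hcont.eventually (lt_mem_nhds (by simpa using hlt v hv hvη))
  obtain ⟨ε, hε, hlt'⟩ := (eventually_mem_nhdsWithin.and hev).exists
  have hmem := mem_dualFace_of_forall_lt (by simp [dotProd_add, dotProd_smul, hp, hu]) hlt'
  have hspan : ε • u ∈ vectorSpan ℝ (dualFace (dualPolytope V) η) := by
    simpa using vsub_mem_vectorSpan ℝ hmem (mem_dualFace_of_forall_lt hp hlt)
  exact (Submodule.smul_mem_iff _ hε).mp hspan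

theorem isFacetOf_dualFace (hV : V.Finite) (h0 : 0 ∈ convexHull ℝ V)
    (hη : η ∈ (convexHull ℝ V).extremePoints ℝ) (hη0 : η ≠ 0) :
    IsFacetOf (dualPolytope V) (dualFace (dualPolytope V) η) := by
  obtain ⟨p, hp, hlt⟩ := exists_dotProd_eq_neg_one_forall_lt hV h0 hη hη0
  refine ⟨isExposed_dualFace ?_, ⟨p, mem_dualFace_of_forall_lt hp hlt⟩, ?_⟩
  · exact subset_dualPolytope_dualPolytope (extremePoints_convexHull_subset hη)
  · have hker := Module.Dual.finrank_ker_add_one_of_ne_zero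
      ((dotProductEquiv ℝ (Fin n)).map_ne_zero_iff.mpr hη0)
    rw [Module.finrank_fin_fun] at hker
    rw [vectorSpan_dualFace hV hp hlt]
    exact Nat.eq_sub_of_add_eq hker

theorem exists_latticePts_isFacetOf_dualFace (hn : n ≠ 0) (hcomp : IsCompact P)
    (hconv : Convex ℝ P) (h0 : 0 ∈ P) (hdual : IsLatticePolytope (dualPolytope P)) :
    ∃ S : Set (Fin n → ℝ), (∀ η ∈ S, IsLatticePt η) ∧ dualPolytope S = P ∧
      ∀ η ∈ S, IsFacetOf P (dualFace P η) := by
  set S := (dualPolytope P).extremePoints ℝ with hS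
  have hSfin : S.Finite := hdual.finite_extremePoints
  have hhull : convexHull ℝ S = dualPolytope P := hdual.convexHull_extremePoints
  have hSP : dualPolytope S = P := by
    rw [← dualPolytope_convexHull, hhull, dualPolytope_dualPolytope hconv hcomp.isClosed h0]
  refine ⟨S, fun η => hdual.isLatticePt_of_mem_extremePoints, hSP, fun η hη => ?_⟩
  rw [hS, ← hhull] at hη
  have hη0 := ne_zero_of_mem_extremePoints_convexHull hn hSfin (hSP ▸ hcomp.isBounded) hη
  simpa only [hSP] using isFacetOf_dualFace hSfin (hhull ▸ zero_mem_dualPolytope) hη hη0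

lemma IsFacetOf.ne_of_nonempty_interior {F : Set (Fin n → ℝ)} (hF : IsFacetOf P F) (hn : n ≠ 0)
    (hP : (interior P).Nonempty) : F ≠ P := by
  rintro rfl
  have htop : vectorSpan ℝ F = ⊤ := AffineSubspace.vectorSpan_eq_top_of_affineSpan_eq_top ℝ _ _ <|
    affineSpan_eq_top_of_nonempty_interior (hP.mono (interior_mono (subset_convexHull ℝ F)))
  have hdim := hF.2.2
  rw [htop, finrank_top, Module.finrank_fin_fun] at hdim
  omega

lemma IsFacetOf.add_notMem {F : Set (Fin n → ℝ)} (hF : IsFacetOf P F) (hn : n ≠ 0)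
    (h0 : 0 ∈ interior P) {x y : Fin n → ℝ} (hx : x ∈ F) (hy : y ∈ F) : x + y ∉ P := by
  obtain ⟨l, c, hc, hle, heq⟩ := exists_pos_of_isExposed_of_zero_mem_interior hF.1 hF.2.1
    (hF.ne_of_nonempty_interior hn ⟨0, h0⟩) h0
  intro hxy
  have hsum : l (x + y) = c + c := by rw [map_add, heq x hx, heq y hy]
  linarith [hle _ hxy]

end Facets

section LatticePoints

variable {n : ℕ} {S : Set (Fin n → ℝ)} {x y z : Fin n → ℝ}

lemma IsLatticePt.add_mem_dualPolytope (hx : IsLatticePt x) (hy : IsLatticePt y)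
    (hS : ∀ η ∈ S, IsLatticePt η) (hxS : x ∈ dualPolytope S) (hyS : y ∈ dualPolytope S)
    (hxy : ∀ η ∈ S, ¬(dotProd η x = -1 ∧ dotProd η y = -1)) : x + y ∈ dualPolytope S := by
  intro η hη
  obtain ⟨a, ha⟩ := (hS η hη).exists_dotProd_eq_intCast hx
  obtain ⟨b, hb⟩ := (hS η hη).exists_dotProd_eq_intCast hy
  have ha_ge : -1 ≤ a := by exact_mod_cast ha ▸ hxS η hη
  have hb_ge : -1 ≤ b := by exact_mod_cast hb ▸ hyS η hη
  have hab : ¬(a = -1 ∧ b = -1) := by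
    rintro ⟨rfl, rfl⟩
    exact hxy η hη ⟨by simp [ha], by simp [hb]⟩
  have hsum : -1 ≤ a + b := by omega
  rw [dotProd_add, ha, hb]
  exact_mod_cast hsum

lemma IsLatticePt.eq_zero_of_mem_interior_dualPolytope (hz : IsLatticePt z)
    (hS : ∀ η ∈ S, IsLatticePt η) (hbdd : Bornology.IsBounded (dualPolytope S))
    (hzi : z ∈ interior (dualPolytope S)) : z = 0 := by
  refine eq_zero_of_forall_dotProd_nonneg hbdd fun η hη => ?_
  have hlt := neg_one_lt_dotProd_of_mem_interior hzi hη
  obtain ⟨m, hm⟩ := (hS η hη).exists_dotProd_eq_intCast hz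
  have hm_nonneg : 0 ≤ m := by
    have : -1 < m := by exact_mod_cast hm ▸ hlt
    omega
  exact_mod_cast hm ▸ Int.cast_nonneg hm_nonneg

end LatticePoints

theorem trichotomy_of_boundary_latticePts_general {n : ℕ} (hn : n ≠ 0) {P : Set (Fin n → ℝ)}
    (hcomp : IsCompact P) (hconv : Convex ℝ P) (h0 : 0 ∈ interior P)
    (hdual : IsLatticePolytope (dualPolytope P)) {x y : Fin n → ℝ} (hx : IsLatticePt x)
    (hy : IsLatticePt y) (hxP : x ∈ P) (hyP : y ∈ P) :
    ((∃ F, IsFacetOf P F ∧ x ∈ F ∧ y ∈ F) ∧ ¬(x + y = 0) ∧ ¬(x + y ∈ frontier P)) ∨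
    (¬(∃ F, IsFacetOf P F ∧ x ∈ F ∧ y ∈ F) ∧ (x + y = 0) ∧ ¬(x + y ∈ frontier P)) ∨
    (¬(∃ F, IsFacetOf P F ∧ x ∈ F ∧ y ∈ F) ∧ ¬(x + y = 0) ∧ (x + y ∈ frontier P)) := by
  obtain ⟨S, hSlat, rfl, hSfacet⟩ :=
    exists_latticePts_isFacetOf_dualFace hn hcomp hconv (interior_subset h0) hdual
  have hfacet : (∃ F, IsFacetOf (dualPolytope S) F ∧ x ∈ F ∧ y ∈ F) ↔ x + y ∉ dualPolytope S := by
    refine ⟨fun ⟨F, hF, hxF, hyF⟩ => hF.add_notMem hn h0 hxF hyF, not_imp_comm.mp fun hno => ?_⟩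
    exact hx.add_mem_dualPolytope hy hSlat hxP hyP fun η hη ⟨hxη, hyη⟩ =>
      hno ⟨_, hSfacet η hη, ⟨hxP, hxη⟩, ⟨hyP, hyη⟩⟩
  have hzero : x + y ∈ interior (dualPolytope S) ↔ x + y = 0 :=
    ⟨(hx.add hy).eq_zero_of_mem_interior_dualPolytope hSlat hcomp.isBounded, fun h => h ▸ h0⟩
  have hsub : x + y ∈ interior (dualPolytope S) → x + y ∈ dualPolytope S :=
    fun h => interior_subset h
  rw [hfacet, ← hzero, hcomp.isClosed.frontier_eq, Set.mem_sdiff]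
  tauto

/-- **(Nill)** For boundary lattice points `x, y` of a reflexive polytope, exactly one of
the following holds: (i) `x` and `y` lie on a common facet; (ii) `x + y = 0`;
(iii) `x + y` lies on the boundary of `P`. -/
theorem trichotomy_of_boundary_latticePts {n : ℕ} (P : Set (Fin n → ℝ))
    (hP : IsReflexive P) (x y : Fin n → ℝ) (hx : IsLatticePt x) (hy : IsLatticePt y)
    (hxb : x ∈ frontier P) (hyb : y ∈ frontier P) :
    ((∃ F, IsFacetOf P F ∧ x ∈ F ∧ y ∈ F) ∧ ¬(x + y = 0) ∧ ¬(x + y ∈ frontier P)) ∨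
    (¬(∃ F, IsFacetOf P F ∧ x ∈ F ∧ y ∈ F) ∧ (x + y = 0) ∧ ¬(x + y ∈ frontier P)) ∨
    (¬(∃ F, IsFacetOf P F ∧ x ∈ F ∧ y ∈ F) ∧ ¬(x + y = 0) ∧ (x + y ∈ frontier P)) := by
  have hn : n ≠ 0 := by
    rintro rfl
    simp at hxb
  have hsub : frontier P ⊆ P := hP.1.isCompact.isClosed.frontier_subset
  exact trichotomy_of_boundary_latticePts_general hn hP.1.isCompact hP.1.convex hP.2.1 hP.2.2 hx hy
    (hsub hxb) (hsub hyb)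
end
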